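/- Let λR > 0 and λD > 0 be real numbers with λR ≠ λD. Then the function ε ↦ (λR² − λD²) · ∫₀^∞ e^{-εt} cos(λD t) sin(λR t) dt tends to λR as ε tends to 0 from the right (i.e., along the filter 𝓝[>] 0). -/

import Mathlib

/-!
By the product-to-sum formula, `2 cos (λD t) sin (λR t) = sin ((λR + λD) t) + sin ((λR - λD) t)`,
so the damped integral is half the sum of two Laplace transforms of sines, each of the form
`ω / (ε² + ω²)` (`integral_exp_neg_mul_sin`). Since `λR ± λD ≠ 0`, these are continuous at `ε = 0`
with values `1 / (λR ± λD)`, and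
`(λR² - λD²) / 2 * (1 / (λR + λD) + 1 / (λR - λD)) = λR`.
-/

open MeasureTheory Filter

/-- The damped sine is the imaginary part of a complex exponential. -/
lemma im_exp_damped (ε w t : ℝ) :
    RCLike.im (Complex.exp ((⟨-ε, w⟩ : ℂ) * t)) = Real.exp (-ε * t) * Real.sin (w * t) := by
  simp [Complex.exp_im]

lemma integrableOn_exp_neg_mul_sin {ε : ℝ} (hε : 0 < ε) (w : ℝ) :
    IntegrableOn (fun t : ℝ => Real.exp (-ε * t) * Real.sin (w * t)) (Set.Ioi 0) := by
  have h := (integrableOn_exp_mul_complex_Ioi (a := ⟨-ε, w⟩) (by simpa using hε) 0).im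
  simpa only [IntegrableOn, im_exp_damped] using h

/-- The Laplace transform of `t ↦ sin (w t)`. -/
lemma integral_exp_neg_mul_sin {ε : ℝ} (hε : 0 < ε) (w : ℝ) :
    ∫ t in Set.Ioi (0 : ℝ), Real.exp (-ε * t) * Real.sin (w * t) = w / (ε ^ 2 + w ^ 2) := by
  have ha : (⟨-ε, w⟩ : ℂ).re < 0 := by simpa using hε
  simp_rw [← im_exp_damped]
  rw [integral_im (integrableOn_exp_mul_complex_Ioi ha 0), integral_exp_mul_complex_Ioi ha]
  simp [Complex.normSq_apply, sq, neg_div]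

/-- For `λR, λD > 0` with `λR ≠ λD`, the function
`ε ↦ (λR² − λD²) · ∫₀^∞ e^{-εt} cos(λD t) sin(λR t) dt` tends to `λR` as `ε → 0⁺`. -/
theorem tendsto_dirichlet_inversion_scalar (lR lD : ℝ) (hlR : 0 < lR) (hlD : 0 < lD)
    (hne : lR ≠ lD) :
    Tendsto (fun ε : ℝ => (lR ^ 2 - lD ^ 2) *
        ∫ t in Set.Ioi (0 : ℝ), Real.exp (-ε * t) * Real.cos (lD * t) * Real.sin (lR * t))
      (nhdsWithin 0 (Set.Ioi 0)) (nhds lR) := by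
  have hp : lR + lD ≠ 0 := by positivity
  have hm : lR - lD ≠ 0 := sub_ne_zero.mpr hne
  have hint : ∀ ε : ℝ, 0 < ε →
      ∫ t in Set.Ioi (0 : ℝ), Real.exp (-ε * t) * Real.cos (lD * t) * Real.sin (lR * t) =
        ((lR + lD) / (ε ^ 2 + (lR + lD) ^ 2) + (lR - lD) / (ε ^ 2 + (lR - lD) ^ 2)) / 2 := by
    intro ε hε
    rw [← integral_exp_neg_mul_sin hε, ← integral_exp_neg_mul_sin hε,
      ← integral_add (integrableOn_exp_neg_mul_sin hε _) (integrableOn_exp_neg_mul_sin hε _),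
      ← integral_div]
    congr 1
    ext t
    rw [add_mul, sub_mul, Real.sin_add, Real.sin_sub]
    ring
  have hcont : ContinuousAt (fun ε : ℝ => (lR ^ 2 - lD ^ 2) *
      (((lR + lD) / (ε ^ 2 + (lR + lD) ^ 2) + (lR - lD) / (ε ^ 2 + (lR - lD) ^ 2)) / 2)) 0 := by
    fun_prop (disch := positivity)
  have hval : (lR ^ 2 - lD ^ 2) * (((lR + lD) / ((0 : ℝ) ^ 2 + (lR + lD) ^ 2) +
      (lR - lD) / ((0 : ℝ) ^ 2 + (lR - lD) ^ 2)) / 2) = lR := by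
    rw [zero_pow two_ne_zero, zero_add, zero_add]
    field_simp
    ring
  have hlim := hcont.tendsto
  rw [hval] at hlim
  refine (hlim.mono_left nhdsWithin_le_nhds).congr' ?_
  filter_upwards [self_mem_nhdsWithin] with ε hε
  rw [hint ε hε]
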